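/- Let w be a group-word in n variables, let m ∈ ℕ, let v = [w(x_1,...,x_n), x_{n+1}, ..., x_{n+m}], and let r ∈ ℕ. If G is a group with |G_w| ≤ r, then |G_v| ≤ (2r)^{2^m}. -/

import Mathlib

/-- The set of `w`-values in `G`: images of the word `w` (an element of the free
group on `n` generators) under all homomorphisms `FreeGroup (Fin n) →* G`. -/
def wValues {n : ℕ} (w : FreeGroup (Fin n)) (G : Type*) [Group G] : Set G :=
  Set.range fun g : Fin n → G => FreeGroup.lift g w

/-- `G_w^* = G_w ∪ G_w⁻¹`. -/
def wValuesStar {n : ℕ} (w : FreeGroup (Fin n)) (G : Type*) [Group G] : Set G :=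
  wValues w G ∪ (wValues w G)⁻¹

/-- The verbal subgroup `w(G)` generated by all `w`-values. -/
def verbalSubgroup {n : ℕ} (w : FreeGroup (Fin n)) (G : Type*) [Group G] : Subgroup G :=
  Subgroup.closure (wValues w G)

/-- The iterated commutator subgroup `[H, G, ..., G]` with `G` repeated `k` times. -/
def iterCommSub (G : Type*) [Group G] (H : Subgroup G) : ℕ → Subgroup G
  | 0 => H
  | k + 1 => ⁅iterCommSub G H k, (⊤ : Subgroup G)⁆

/-- The set of conjugates `x^S = {g⁻¹ x g : g ∈ S}`. -/
def conjSet {G : Type*} [Group G] (x : G) (S : Set G) : Set G :=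
  (fun g => g⁻¹ * x * g) '' S

/-- `G` is an `FC(w)`-group: every conjugacy set `x^{G_w}` is finite. -/
def IsFCw {n : ℕ} (w : FreeGroup (Fin n)) (G : Type*) [Group G] : Prop :=
  ∀ x : G, (conjSet x (wValues w G)).Finite

/-- `G` is a `BFC(w)`-group: the sets `x^{G_w}` are finite of bounded size. -/
def IsBFCw {n : ℕ} (w : FreeGroup (Fin n)) (G : Type*) [Group G] : Prop :=
  ∃ c : ℕ, ∀ x : G,
    (conjSet x (wValues w G)).Finite ∧ (conjSet x (wValues w G)).ncard ≤ c

/-- A subgroup `H` is `FC`-embedded in `G` if `x^H` is finite for every `x ∈ G`. -/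
def IsFCEmbedded {G : Type*} [Group G] (H : Subgroup G) : Prop :=
  ∀ x : G, (conjSet x (H : Set G)).Finite

/-- A subgroup `H` is `BFC`-embedded in `G` if the sets `x^H` are finite of bounded size. -/
def IsBFCEmbedded {G : Type*} [Group G] (H : Subgroup G) : Prop :=
  ∃ d : ℕ, ∀ x : G,
    (conjSet x (H : Set G)).Finite ∧ (conjSet x (H : Set G)).ncard ≤ d

/-- A word `w` is `(1/k)`-concise (`k ≥ 1`): in every group `G` with `G_w` finite,
the subgroup `[w(G), G, ..., G]` (with `G` repeated `k - 1` times) is finite. -/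
def IsFracConcise {n : ℕ} (w : FreeGroup (Fin n)) (k : ℕ) : Prop :=
  ∀ (G : Type*) [Group G], (wValues w G).Finite →
    ((iterCommSub G (verbalSubgroup w G) (k - 1) : Subgroup G) : Set G).Finite

/-- A word `w` is `0`-concise: in every group `G` with `G_w` finite, some iterated
commutator subgroup `[w(G), G, ..., G]` is finite. -/
def IsZeroConcise {n : ℕ} (w : FreeGroup (Fin n)) : Prop :=
  ∀ (G : Type*) [Group G], (wValues w G).Finite →
    ∃ k : ℕ, ((iterCommSub G (verbalSubgroup w G) k : Subgroup G) : Set G).Finite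

/-- The commutator `[a, b] = a⁻¹ b⁻¹ a b`. -/
def pcomm {G : Type*} [Group G] (a b : G) : G := a⁻¹ * b⁻¹ * a * b

/-- The word `w(x_1, ..., x_n)` viewed in the free group on `n + m` generators. -/
def extendWord {n : ℕ} (m : ℕ) (w : FreeGroup (Fin n)) : FreeGroup (Fin (n + m)) :=
  FreeGroup.map (Fin.castAdd m) w

/-- The word `v = [w(x_1, ..., x_n), x_{n+1}, ..., x_{n+m}]`. -/
def commWord {n : ℕ} (m : ℕ) (w : FreeGroup (Fin n)) : FreeGroup (Fin (n + m)) :=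
  (List.ofFn fun i : Fin m => FreeGroup.of (Fin.natAdd n i)).foldl pcomm (extendWord m w)

/-- The iterated commutator `[y, b, ..., b]` with `b` repeated `k` times. -/
def iterPcomm {G : Type*} [Group G] (y b : G) : ℕ → G
  | 0 => y
  | k + 1 => pcomm (iterPcomm y b k) b

/-!
A value `[a, b] = a⁻¹ * (b⁻¹ * a * b)` of `[w, x]` is the product of the inverse of a `w`-value and
a `w`-value, since the set of `w`-values is closed under conjugation. Hence
`|G_[w, x]| ≤ |G_w| ^ 2`, for infinite cardinals as well, and iterating `m` times gives
`|G_v| ≤ |G_w| ^ 2 ^ m`.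
-/

open scoped Cardinal Pointwise

theorem finite_and_ncard_le_pow_of_mk_le_pow.{u} {α β : Type u} {s : Set α} {t : Set β} {k : ℕ}
    (hs : s.Finite) (h : #t ≤ #s ^ k) : t.Finite ∧ t.ncard ≤ s.ncard ^ k := by
  rw [← Set.cast_ncard hs, ← Nat.cast_pow] at h
  have ht : t.Finite :=
    Cardinal.lt_aleph0_iff_set_finite.mp (h.trans_lt Cardinal.natCast_lt_aleph0)
  rw [← Set.cast_ncard ht, Nat.cast_le] at h
  exact ⟨ht, h⟩

section pcomm

variable {G H : Type*} [Group G] [Group H]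

theorem pcomm_eq_inv_mul_conj (a b : G) : pcomm a b = a⁻¹ * MulAut.conj b⁻¹ a := by
  simp [pcomm, mul_assoc]

theorem map_pcomm (f : G →* H) (a b : G) : f (pcomm a b) = pcomm (f a) (f b) := by
  simp [pcomm]

theorem map_foldl_pcomm (f : G →* H) (a : G) (l : List G) :
    f (l.foldl pcomm a) = (l.map f).foldl pcomm (f a) := by
  rw [List.foldl_map]
  exact (List.foldl_hom f fun a b => (map_pcomm f a b).symm).symm

end pcomm

section wValues

variable {n : ℕ} {w : FreeGroup (Fin n)} {G H : Type*} [Group G] [Group H]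

theorem map_mem_wValues (f : G →* H) {a : G} (ha : a ∈ wValues w G) :
    f a ∈ wValues w H := by
  obtain ⟨g, rfl⟩ := ha
  exact ⟨f ∘ g, (FreeGroup.lift_unique (f.comp (FreeGroup.lift g)) (by simp)).symm⟩

variable (w)

theorem wValues_extendWord (m : ℕ) : wValues (extendWord m w) G = wValues w G := by
  have lift_extendWord (g : Fin (n + m) → G) :
      FreeGroup.lift g (extendWord m w) = FreeGroup.lift (g ∘ Fin.castAdd m) w := by
    simp only [extendWord]
    exact FreeGroup.lift_unique ((FreeGroup.lift g).comp (FreeGroup.map _)) (by simp)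
  apply Set.Subset.antisymm
  · rintro _ ⟨g, rfl⟩
    exact ⟨g ∘ Fin.castAdd m, (lift_extendWord g).symm⟩
  · rintro _ ⟨g, rfl⟩
    refine ⟨Fin.append g 1, (lift_extendWord _).trans ?_⟩
    congr 2
    ext i
    exact Fin.append_left g 1 i

theorem wValues_pcomm_subset (u : FreeGroup (Fin n)) :
    wValues (pcomm w u) G ⊆ (wValues w G)⁻¹ * wValues w G := by
  rintro _ ⟨g, rfl⟩
  have hw : FreeGroup.lift g w ∈ wValues w G := ⟨g, rfl⟩
  simp only [map_pcomm]
  rw [pcomm_eq_inv_mul_conj]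
  exact Set.mul_mem_mul (Set.inv_mem_inv.mpr hw) (map_mem_wValues (MulAut.conj _).toMonoidHom hw)

theorem mk_wValues_pcomm_le (u : FreeGroup (Fin n)) :
    #(wValues (pcomm w u) G) ≤ #(wValues w G) ^ 2 :=
  calc #(wValues (pcomm w u) G)
      ≤ #((wValues w G)⁻¹ * wValues w G : Set G) :=
        Cardinal.mk_le_mk_of_subset (wValues_pcomm_subset w u)
    _ ≤ #((wValues w G)⁻¹ : Set G) * #(wValues w G) := Cardinal.mk_mul_le
    _ = #(wValues w G) ^ 2 := by rw [Cardinal.mk_inv, sq]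

end wValues

section commWord

variable {n : ℕ} (m : ℕ) (w : FreeGroup (Fin n))

theorem commWord_zero : commWord 0 w = w := by
  simp [commWord, extendWord]

-- The two sides typecheck together because `n + (m + 1)` reduces to `(n + m) + 1`.
theorem commWord_succ :
    commWord (m + 1) w =
      pcomm (extendWord 1 (commWord m w)) (FreeGroup.of (Fin.last (n + m))) := by
  simp only [commWord, extendWord, List.ofFn_succ_last, List.foldl_append, List.foldl_cons,
    List.foldl_nil, map_foldl_pcomm, List.map_ofFn, FreeGroup.map.comp]
  rfl

end commWord

theorem statement_14_general {n : ℕ} (m : ℕ) (w : FreeGroup (Fin n)) (G : Type*) [Group G] :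
    #(wValues (commWord m w) G) ≤ #(wValues w G) ^ (2 ^ m : ℕ) := by
  induction m with
  | zero => simp [commWord_zero]
  | succ m ih =>
    calc #(wValues (commWord (m + 1) w) G)
        ≤ #(wValues (extendWord 1 (commWord m w)) G) ^ 2 := by
          rw [commWord_succ]
          exact mk_wValues_pcomm_le _ _
      _ = #(wValues (commWord m w) G) ^ 2 := by rw [wValues_extendWord]
      _ ≤ (#(wValues w G) ^ (2 ^ m : ℕ)) ^ 2 := pow_le_pow_left' ih 2
      _ = #(wValues w G) ^ (2 ^ (m + 1) : ℕ) := by rw [← pow_mul, ← pow_succ]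

/-- if `|G_w| ≤ r`, then `|G_v| ≤ (2r)^{2^m}` for
`v = [w, x_{n+1}, ..., x_{n+m}]`. -/
theorem statement_14 {n : ℕ} (m : ℕ) (w : FreeGroup (Fin n)) (r : ℕ)
    (G : Type*) [Group G] (hfin : (wValues w G).Finite)
    (hcard : (wValues w G).ncard ≤ r) :
    (wValues (commWord m w) G).Finite ∧
      (wValues (commWord m w) G).ncard ≤ (2 * r) ^ 2 ^ m := by
  have ⟨hv, hle⟩ := finite_and_ncard_le_pow_of_mk_le_pow hfin (statement_14_general m w G)
  exact ⟨hv, hle.trans (Nat.pow_le_pow_left (by lia) _)⟩
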